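/- For every integer k ≥ 8, the online size Ramsey number of the 4-cycle versus the path on k vertices satisfies ř(C₄,P_k) ≥ 2k − 2; equivalently, Painter has a strategy surviving 2k − 3 rounds without creating a red C₄ or a blue P_k. -/

import Mathlib

open SimpleGraph

/-- The set `S` of edges of the infinite complete graph on `ℕ` contains a copy of
the graph `G`: there is an injective map of the vertices of `G` into `ℕ` sending
every edge of `G` into `S`. -/
def HasCopy {V : Type*} (G : SimpleGraph V) (S : Set (Sym2 ℕ)) : Prop :=
  ∃ f : V → ℕ, Function.Injective f ∧ ∀ a b, G.Adj a b → s(f a, f b) ∈ S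

/-- `BuilderWinsIn G H R B r` means: in the online Ramsey game with targets a red copy
of `G` and a blue copy of `H`, from the position in which the edges in `R` have been
colored red and the edges in `B` have been colored blue, Builder has a strategy that
guarantees, against every Painter strategy, that within at most `r` further rounds the
colored edges contain a red copy of `G` or a blue copy of `H`.  (In each round Builder
chooses a previously unchosen non-loop edge of the infinite complete graph on `ℕ`, and
Painter immediately colors it red or blue; so Builder wins within `r + 1` rounds iff he
has already won, or he can choose an edge such that whichever color Painter gives it,
he can win within `r` further rounds.) -/
def BuilderWinsIn {V W : Type*} (G : SimpleGraph V) (H : SimpleGraph W) :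
    Set (Sym2 ℕ) → Set (Sym2 ℕ) → ℕ → Prop
  | R, B, 0 => HasCopy G R ∨ HasCopy H B
  | R, B, (r + 1) => HasCopy G R ∨ HasCopy H B ∨
      ∃ e : Sym2 ℕ, ¬ e.IsDiag ∧ e ∉ R ∧ e ∉ B ∧
        BuilderWinsIn G H (insert e R) B r ∧ BuilderWinsIn G H R (insert e B) r

/-- The online size Ramsey number `ř(G, H)`: the least `t` such that, starting from the
empty position, Builder can force a red copy of `G` or a blue copy of `H` within at
most `t` rounds. -/
noncomputable def onlineRamsey {V W : Type*} (G : SimpleGraph V) (H : SimpleGraph W) : ℕ :=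
  sInf {t | BuilderWinsIn G H ∅ ∅ t}

/-!
Painter colours an edge red exactly when the red graph stays a forest. There is then never a red
copy of a graph containing a cycle, and the endpoints of every blue edge lie in the same red tree.
A blue copy of a connected graph `H` on `n` vertices therefore lives inside a single red tree, which
has at least `n - 1` edges, so Builder needs at least `n - 1 + e(H)` rounds; for `H = Pₖ` this is
`2 * k - 2`. As `sInf ∅ = 0`, the bound on `onlineRamsey` also requires that Builder can win at all:
he plays every edge of a large enough clique and appeals to Ramsey's theorem.
-/

section Graph

variable {α β : Type*} {G G' : SimpleGraph α} {H : SimpleGraph β}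

theorem exists_adj_dist_lt {u v : α} (h : G.Reachable u v) (hne : u ≠ v) :
    ∃ w, G.Adj u w ∧ G.dist w v < G.dist u v := by
  obtain ⟨p, hp⟩ := h.exists_walk_length_eq_dist
  cases p with
  | nil => exact absurd rfl hne
  | cons hadj q =>
    refine ⟨_, hadj, (dist_le q).trans_lt ?_⟩
    rw [← hp, Walk.length_cons]
    exact q.length.lt_succ_self

-- Root the vertices at `u ∈ S` and send every other vertex to the edge towards its parent, which is
-- closer to `u`.
theorem encard_le_encard_edgeSet_add_one_of_reachable {S : Set α}
    (hS : ∀ a ∈ S, ∀ b ∈ S, G.Reachable a b) : S.encard ≤ G.edgeSet.encard + 1 := by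
  obtain rfl | ⟨u, hu⟩ := S.eq_empty_or_nonempty
  · simp
  have exists_parent : ∀ v ∈ S \ {u}, ∃ w, G.Adj v w ∧ G.dist w u < G.dist v u :=
    fun v hv ↦ exists_adj_dist_lt (hS v hv.1 u hu) hv.2
  choose! parent adj_parent dist_parent_lt using exists_parent
  rw [← Set.encard_sdiff_singleton_add_one hu]
  gcongr
  refine Set.encard_le_encard_of_injOn (f := fun v ↦ s(v, parent v)) adj_parent ?_
  intro v hv w hw hvw
  obtain ⟨rfl, -⟩ | ⟨hv_eq, hw_eq⟩ := Sym2.eq_iff.1 hvw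
  · rfl
  · have hv_lt := dist_parent_lt v hv
    have hw_lt := dist_parent_lt w hw
    rw [hw_eq] at hv_lt
    rw [← hv_eq] at hw_lt
    exact absurd hv_lt hw_lt.asymm

theorem encard_edgeSet_le_of_isContained (h : G ⊑ H) : G.edgeSet.encard ≤ H.edgeSet.encard :=
  let ⟨f⟩ := h
  f.mapEdgeSet.encard_le

theorem encard_edgeSet_fromEdgeSet_le (S : Set (Sym2 α)) :
    (fromEdgeSet S).edgeSet.encard ≤ S.encard :=
  Set.encard_le_encard (by simp)

theorem isAcyclic_of_isContained (h : G ⊑ H) (hH : H.IsAcyclic) : G.IsAcyclic :=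
  let ⟨f⟩ := h
  hH.comap f.toHom f.injective

theorem not_isAcyclic_cycleGraph {n : ℕ} (hn : 3 ≤ n) : ¬ (cycleGraph n).IsAcyclic :=
  fun h ↦ isAcyclic_iff_free_cycleGraph.1 h n hn .rfl

theorem le_ncard_edgeSet_pathGraph_add_one (n : ℕ) : n ≤ (pathGraph n).edgeSet.ncard + 1 := by
  cases n with
  | zero => exact Nat.zero_le _
  | succ n => simpa using (pathGraph_connected n).card_vert_le_card_edgeSet_add_one

theorem reachable_map_of_forall_adj {f : α → β}
    (hf : ∀ a b, G.Adj a b → H.Reachable (f a) (f b)) {a b : α} (h : G.Reachable a b) :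
    H.Reachable (f a) (f b) := by
  obtain ⟨p⟩ := h
  induction p with
  | nil => rfl
  | cons hadj _ ih => exact (hf _ _ hadj).trans ih

theorem isContained_of_isNClique [Finite β] {T : Finset α} (hT : G.IsNClique (Nat.card β) T) :
    H ⊑ G := by
  have hclique : completeGraph (Fin (Nat.card β)) ⊑ G :=
    (not_cliqueFree_iff_top_isContained _).1 fun hfree ↦ hfree T hT
  exact (isContained_top_iff.2 ⟨(Finite.equivFin β).toEmbedding⟩).trans hclique

-- Ramsey's theorem with the Erdős–Szekeres bound: by Pascal's identity, one of the two
-- neighbourhoods of a vertex is large enough for the inductive hypothesis.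
theorem exists_isNClique_of_isClique_sup {m n : ℕ} {S : Finset α} (hS : (G ⊔ G').IsClique S)
    (hcard : (m + n).choose m ≤ S.card) :
    (∃ T ⊆ S, G.IsNClique m T) ∨ ∃ T ⊆ S, G'.IsNClique n T := by
  classical
  induction m generalizing n S with
  | zero => exact .inl ⟨∅, by simp⟩
  | succ m ihm =>
  induction n generalizing S with
  | zero => exact .inr ⟨∅, by simp⟩
  | succ n ihn =>
  have pascal : (m + 1 + (n + 1)).choose (m + 1) =
      (m + (n + 1)).choose m + (m + 1 + n).choose (m + 1) := by
    rw [Nat.add_right_comm m 1 (n + 1), Nat.choose_succ_succ', Nat.add_right_comm m 1 n]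
    rfl
  have ⟨v, hv⟩ : S.Nonempty := Finset.card_pos.1 <| by
    grw [← hcard]
    exact Nat.choose_pos (by omega)
  let N := {w ∈ S | G.Adj v w}
  let N' := {w ∈ S | G'.Adj v w}
  have hcover : S ⊆ insert v (N ∪ N') := by
    intro w hw
    obtain rfl | hvw := eq_or_ne v w
    · exact Finset.mem_insert_self _ _
    · have hadj : G.Adj v w ∨ G'.Adj v w := hS hv hw hvw
      grind
  have hcard_le : S.card ≤ N.card + N'.card + 1 := by
    grw [hcover, Finset.card_insert_le, Finset.card_union_le]
  have hlarge : (m + (n + 1)).choose m ≤ N.card ∨ (m + 1 + n).choose (m + 1) ≤ N'.card := by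
    omega
  have hN : N ⊆ S := Finset.filter_subset _ _
  have hN' : N' ⊆ S := Finset.filter_subset _ _
  rcases hlarge with hlarge | hlarge
  · refine (ihm (hS.subset hN) hlarge).imp (fun ⟨T, hTN, hT⟩ ↦ ?_) (fun ⟨T, hTN, hT⟩ ↦ ?_)
    · exact ⟨insert v T, by grind, hT.insert fun w hw ↦ (Finset.mem_filter.1 (hTN hw)).2⟩
    · exact ⟨T, hTN.trans hN, hT⟩
  · refine (ihn (hS.subset hN') hlarge).imp (fun ⟨T, hTN, hT⟩ ↦ ?_) (fun ⟨T, hTN, hT⟩ ↦ ?_)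
    · exact ⟨T, hTN.trans hN', hT⟩
    · exact ⟨insert v T, by grind, hT.insert fun w hw ↦ (Finset.mem_filter.1 (hTN hw)).2⟩

end Graph

section Game

variable {V W : Type*} {G : SimpleGraph V} {H : SimpleGraph W} {R B : Set (Sym2 ℕ)}

theorem hasCopy_iff_isContained {S : Set (Sym2 ℕ)} : HasCopy G S ↔ G ⊑ fromEdgeSet S := by
  constructor
  · rintro ⟨f, hf, hadj⟩
    exact ⟨⟨f, fun hab ↦ (fromEdgeSet_adj S).2 ⟨hadj _ _ hab, hf.ne hab.ne⟩⟩, hf⟩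
  · rintro ⟨f⟩
    exact ⟨f, f.injective, fun a b hab ↦ ((fromEdgeSet_adj S).1 (f.toHom.map_adj hab)).1⟩

/-- The invariant of Painter's strategy: the red edges `R` form a forest, and adding any of the blue
edges `B` to it would not connect two of its trees. -/
structure IsForestPosition (R B : Set (Sym2 ℕ)) : Prop where
  isAcyclic_red : (fromEdgeSet R).IsAcyclic
  reachable_of_blue : ∀ a b, s(a, b) ∈ B → (fromEdgeSet R).Reachable a b

namespace IsForestPosition

theorem empty : IsForestPosition ∅ ∅ where
  isAcyclic_red := by simp
  reachable_of_blue := by simp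

theorem insert_or_insert (h : IsForestPosition R B) (e : Sym2 ℕ) :
    IsForestPosition (insert e R) B ∨ IsForestPosition R (insert e B) := by
  obtain ⟨x, y⟩ := e
  by_cases hxy : (fromEdgeSet R).Reachable x y
  · refine .inr ⟨h.isAcyclic_red, ?_⟩
    rintro a b (hab | hab)
    · obtain ⟨rfl, rfl⟩ | ⟨rfl, rfl⟩ := Sym2.eq_iff.1 hab
      exacts [hxy, hxy.symm]
    · exact h.reachable_of_blue a b hab
  · have hR : fromEdgeSet (insert s(x, y) R) = fromEdgeSet R ⊔ edge x y := by
      rw [edge, ← fromEdgeSet_union, Set.union_singleton]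
    refine .inl ⟨?_, fun a b hab ↦ ?_⟩
    · rw [hR]
      exact h.isAcyclic_red.sup_edge_of_not_reachable hxy
    · exact (h.reachable_of_blue a b hab).mono (fromEdgeSet_mono (Set.subset_insert _ _))

theorem not_hasCopy_red (h : IsForestPosition R B) (hG : ¬ G.IsAcyclic) : ¬ HasCopy G R :=
  fun hcopy ↦ hG (isAcyclic_of_isContained (hasCopy_iff_isContained.1 hcopy) h.isAcyclic_red)

theorem card_le_encard_red_add_one (h : IsForestPosition R B) (hH : H.Preconnected)
    (hcopy : HasCopy H B) : ENat.card W ≤ R.encard + 1 := by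
  obtain ⟨f, hf, hadj⟩ := hcopy
  have hreach : ∀ a b, (fromEdgeSet R).Reachable (f a) (f b) := fun a b ↦
    reachable_map_of_forall_adj (fun a b hab ↦ h.reachable_of_blue _ _ (hadj a b hab)) (hH a b)
  calc ENat.card W ≤ (Set.range f).encard := hf.encard_range
    _ ≤ (fromEdgeSet R).edgeSet.encard + 1 := encard_le_encard_edgeSet_add_one_of_reachable <| by
        rintro _ ⟨a, rfl⟩ _ ⟨b, rfl⟩
        exact hreach a b
    _ ≤ R.encard + 1 := by grw [encard_edgeSet_fromEdgeSet_le]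

theorem not_hasCopy_blue (h : IsForestPosition R B) (hH : H.Preconnected)
    (hcard : R.encard + B.encard + 1 < ENat.card W + H.edgeSet.encard) : ¬ HasCopy H B := by
  intro hcopy
  have hvert : ENat.card W ≤ R.encard + 1 := h.card_le_encard_red_add_one hH hcopy
  have hedges : H.edgeSet.encard ≤ B.encard :=
    (encard_edgeSet_le_of_isContained (hasCopy_iff_isContained.1 hcopy)).trans
      (encard_edgeSet_fromEdgeSet_le B)
  refine hcard.not_ge ?_
  grw [hvert, hedges, add_right_comm]

theorem not_builderWinsIn (h : IsForestPosition R B) (hG : ¬ G.IsAcyclic) (hH : H.Preconnected)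
    {r : ℕ} (hr : R.encard + B.encard + 1 + r < ENat.card W + H.edgeSet.encard) :
    ¬ BuilderWinsIn G H R B r := by
  induction r generalizing R B with
  | zero =>
    rintro (hred | hblue)
    · exact h.not_hasCopy_red hG hred
    · exact h.not_hasCopy_blue hH (le_self_add.trans_lt hr) hblue
  | succ r ih =>
    push_cast at hr
    rintro (hred | hblue | ⟨e, -, -, -, hwins_red, hwins_blue⟩)
    · exact h.not_hasCopy_red hG hred
    · exact h.not_hasCopy_blue hH (le_self_add.trans_lt hr) hblue
    obtain h' | h' := h.insert_or_insert e
    · refine ih h' (lt_of_le_of_lt ?_ hr) hwins_red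
      grw [Set.encard_insert_le]
      exact le_of_eq (by ring)
    · refine ih h' (lt_of_le_of_lt ?_ hr) hwins_blue
      grw [Set.encard_insert_le]
      exact le_of_eq (by ring)

end IsForestPosition

theorem builderWinsIn_card_of_forall_coloring {E : Finset (Sym2 ℕ)}
    (hE : ∀ e ∈ E, ¬ e.IsDiag ∧ e ∉ R ∧ e ∉ B)
    (hwin : ∀ R' B' : Set (Sym2 ℕ), R ∪ B ∪ E ⊆ R' ∪ B' → HasCopy G R' ∨ HasCopy H B') :
    BuilderWinsIn G H R B E.card := by
  classical
  induction E using Finset.induction_on generalizing R B with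
  | empty => exact hwin R B (by simp)
  | insert e E he ih =>
    obtain ⟨⟨hdiag, heR, heB⟩, hE⟩ := (Finset.forall_mem_insert _ _ _).1 hE
    rw [Finset.coe_insert] at hwin
    rw [Finset.card_insert_of_notMem he]
    refine .inr (.inr ⟨e, hdiag, heR, heB, ih ?_ ?_, ih ?_ ?_⟩) <;> grind

theorem exists_builderWinsIn [Finite V] [Finite W] (G : SimpleGraph V) (H : SimpleGraph W) :
    ∃ t, BuilderWinsIn G H ∅ ∅ t := by
  classical
  let S := Finset.range ((Nat.card V + Nat.card W).choose (Nat.card V))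
  refine ⟨_, builderWinsIn_card_of_forall_coloring (E := {e ∈ S.sym2 | ¬ e.IsDiag}) (by simp) ?_⟩
  intro R B hcover
  have hclique : (fromEdgeSet R ⊔ fromEdgeSet B).IsClique S := by
    intro a ha b hb hab
    rw [← fromEdgeSet_union, fromEdgeSet_adj]
    exact ⟨hcover <| by simp_all, hab⟩
  simp only [hasCopy_iff_isContained]
  exact (exists_isNClique_of_isClique_sup hclique (by simp [S])).imp
    (fun ⟨_, _, hT⟩ ↦ isContained_of_isNClique hT) (fun ⟨_, _, hT⟩ ↦ isContained_of_isNClique hT)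

theorem onlineRamsey_C4_path_lower_general [Finite V] [Finite W] (hG : ¬ G.IsAcyclic)
    (hH : H.Preconnected) :
    Nat.card W + H.edgeSet.ncard - 1 ≤ onlineRamsey G H ∧
      ∀ t < Nat.card W + H.edgeSet.ncard - 1, ¬ BuilderWinsIn G H ∅ ∅ t := by
  have not_wins : ∀ t < Nat.card W + H.edgeSet.ncard - 1, ¬ BuilderWinsIn G H ∅ ∅ t := by
    intro t ht
    refine IsForestPosition.empty.not_builderWinsIn hG hH ?_
    rw [← Set.coe_ncard_eq_encard H.edgeSet, ENat.card_eq_coe_natCard, Set.encard_empty]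
    norm_cast
    omega
  refine ⟨?_, not_wins⟩
  by_contra! hlt
  exact not_wins _ hlt (Nat.sInf_mem (exists_builderWinsIn G H))

end Game

/-- For every integer `k ≥ 8` we have `ř(C₄, Pₖ) ≥ 2 * k - 2`; equivalently, Painter has
a strategy surviving `2 * k - 3` rounds without creating a red `C₄` or a blue `Pₖ`,
i.e. Builder cannot force a win from the empty position within `2 * k - 3` rounds. -/
theorem onlineRamsey_C4_path_lower (k : ℕ) (hk : 8 ≤ k) :
    2 * k - 2 ≤ onlineRamsey (cycleGraph 4) (pathGraph k) ∧
      ¬ BuilderWinsIn (cycleGraph 4) (pathGraph k) ∅ ∅ (2 * k - 3) := by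
  have hlower := onlineRamsey_C4_path_lower_general
    (not_isAcyclic_cycleGraph (n := 4) (by norm_num)) (pathGraph_preconnected k)
  have hedges : k ≤ (pathGraph k).edgeSet.ncard + 1 := le_ncard_edgeSet_pathGraph_add_one k
  rw [Nat.card_fin] at hlower
  exact ⟨by omega, hlower.2 _ (by omega)⟩
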